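/- arXiv:1601.04186 — 2 statements merged into one kernel-verified Lean document; each statement's English description precedes it below -/
import Mathlib

section
/- Let F = {f₁,…,f_k} be an IFS of similarities on ℝ^d satisfying the open set condition, all with common similarity factor c ∈ (0,1), with attractor K of positive diameter and natural fractal structure Γ_n = {f_ω(K) : ω ∈ I^n}. Then the fractal dimension II of K, dim²(K) = lim_{n→∞} log N_n(K) / (−log δ(K, Γ_n)), exists and equals the box dimension of K, and both equal −log k / log c. Here N_n(K) is the number of elements of Γ_n (counted with multiplicity) meeting K, and δ(K, Γ_n) is the supremum of diameters of such elements. -/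
open Metric Set Filter Topology MeasureTheory ENNReal NNReal

noncomputable section

/-- A map is a similarity with factor `c` if it scales all distances exactly by `c`. -/
def IsSimilarity {X : Type*} [MetricSpace X] (f : X → X) (c : ℝ) : Prop :=
  ∀ x y, dist (f x) (f y) = c * dist x y

/-- Composition `f_{ω₁} ∘ ⋯ ∘ f_{ω_n}` of the maps of an IFS along a word `ω`. -/
def wordComp {X : Type*} {k : ℕ} (f : Fin k → X → X) {n : ℕ} (ω : Fin n → Fin k) : X → X :=
  (List.ofFn fun i => f (ω i)).foldr (· ∘ ·) id

/-- Number of elements of level `Γ_n` of the natural fractal structure (counted with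
multiplicity over words) that meet `K`. -/
def levelCount {X : Type*} [MetricSpace X] {k : ℕ} (f : Fin k → X → X) (K : Set X)
    (n : ℕ) : ℕ :=
  Set.ncard {ω : Fin n → Fin k | ((wordComp f ω '' K) ∩ K).Nonempty}

/-- `δ(K, Γ_n)`: supremum of diameters of the elements of level `Γ_n` meeting `K`. -/
def deltaLevel {X : Type*} [MetricSpace X] {k : ℕ} (f : Fin k → X → X) (K : Set X)
    (n : ℕ) : ℝ :=
  sSup {d : ℝ | ∃ ω : Fin n → Fin k, ((wordComp f ω '' K) ∩ K).Nonempty ∧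
    d = Metric.diam (wordComp f ω '' K)}

/-- `N_δ(K)`: the largest number of disjoint closed balls of radius `δ` with centres in `K`. -/
def packingNum {X : Type*} [MetricSpace X] (K : Set X) (δ : ℝ) : ℕ :=
  sSup {m : ℕ | ∃ t : Finset X, t.card = m ∧ ↑t ⊆ K ∧
    (t : Set X).Pairwise fun x y => Disjoint (Metric.closedBall x δ) (Metric.closedBall y δ)}

/-- The pre-measure `H^s_{n,3}(K)`: infimum over whole levels `m ≥ n` of the sum of the
`s`-th powers of the diameters of all elements of that level (with multiplicity). -/
def H3pre {X : Type*} [MetricSpace X] {k : ℕ} (f : Fin k → X → X) (K : Set X)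
    (s : ℝ) (n : ℕ) : ℝ≥0∞ :=
  ⨅ m : {m : ℕ // n ≤ m}, ∑ ω : Fin m.1 → Fin k,
    ENNReal.ofReal (Metric.diam (wordComp f ω '' K)) ^ s

/-- `H^s_3(K)`: the (monotone) limit of `H^s_{n,3}(K)` as `n → ∞`. -/
def H3 {X : Type*} [MetricSpace X] {k : ℕ} (f : Fin k → X → X) (K : Set X) (s : ℝ) : ℝ≥0∞ :=
  ⨆ n : ℕ, H3pre f K s n

/-- `H^s_4(K)`: limit over `n` of the infimum over finite covers of `K` by elements of
levels `≥ n` of the natural fractal structure. -/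
def H4 {X : Type*} [MetricSpace X] {k : ℕ} (f : Fin k → X → X) (K : Set X) (s : ℝ) : ℝ≥0∞ :=
  ⨆ n : ℕ, ⨅ (𝒜 : Set (Set X)) (_ : 𝒜.Finite ∧
      (∀ A ∈ 𝒜, ∃ m, n ≤ m ∧ ∃ ω : Fin m → Fin k, A = wordComp f ω '' K) ∧ K ⊆ ⋃₀ 𝒜),
    ∑' A : 𝒜, ENNReal.ofReal (Metric.diam (A : Set X)) ^ s

/-- `H^s_5(K)`: limit over `n` of the infimum over countable covers of `K` by elements of
levels `≥ n` of the natural fractal structure. -/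
def H5 {X : Type*} [MetricSpace X] {k : ℕ} (f : Fin k → X → X) (K : Set X) (s : ℝ) : ℝ≥0∞ :=
  ⨆ n : ℕ, ⨅ (𝒜 : Set (Set X)) (_ : 𝒜.Countable ∧
      (∀ A ∈ 𝒜, ∃ m, n ≤ m ∧ ∃ ω : Fin m → Fin k, A = wordComp f ω '' K) ∧ K ⊆ ⋃₀ 𝒜),
    ∑' A : 𝒜, ENNReal.ofReal (Metric.diam (A : Set X)) ^ s

/-- `H^s_6(K)`: limit as `δ → 0` of the infimum over countable covers of `K` by
fractal-structure elements of diameter at most `δ`. -/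
def H6 {X : Type*} [MetricSpace X] {k : ℕ} (f : Fin k → X → X) (K : Set X) (s : ℝ) : ℝ≥0∞ :=
  ⨆ (δ : ℝ) (_ : 0 < δ), ⨅ (𝒜 : Set (Set X)) (_ : 𝒜.Countable ∧
      (∀ A ∈ 𝒜, (∃ m, ∃ ω : Fin m → Fin k, A = wordComp f ω '' K) ∧ Metric.diam A ≤ δ) ∧
      K ⊆ ⋃₀ 𝒜),
    ∑' A : 𝒜, ENNReal.ofReal (Metric.diam (A : Set X)) ^ s

/-- The open set condition for a family of self-maps of `ℝ^d`. -/
def OSC {d k : ℕ} (f : Fin k → EuclideanSpace ℝ (Fin d) → EuclideanSpace ℝ (Fin d)) : Prop :=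
  ∃ V : Set (EuclideanSpace ℝ (Fin d)), V.Nonempty ∧ IsOpen V ∧ Bornology.IsBounded V ∧
    (∀ i, f i '' V ⊆ V) ∧ Pairwise fun i j => Disjoint (f i '' V) (f j '' V)

theorem wc_zero {X : Type*} {k : ℕ} (f : Fin k → X → X) (ω : Fin 0 → Fin k) :
    wordComp f ω = id := by
  simp [wordComp]

theorem wc_succ {X : Type*} {k : ℕ} (f : Fin k → X → X) {n : ℕ} (ω : Fin (n+1) → Fin k) :
    wordComp f ω = f (ω 0) ∘ wordComp f (Fin.tail ω) := by
  simp [wordComp, List.ofFn_succ, Fin.tail]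

theorem wc_sim {X : Type*} [MetricSpace X] {k : ℕ} (f : Fin k → X → X) (c : ℝ)
    (hf : ∀ i, IsSimilarity (f i) c) :
    ∀ {n : ℕ} (ω : Fin n → Fin k), IsSimilarity (wordComp f ω) (c ^ n) := by
  intro n
  induction n with
  | zero => intro ω x y; simp [wc_zero]
  | succ n ih =>
    intro ω x y
    rw [wc_succ, Function.comp, Function.comp, hf, ih]
    ring

theorem wc_maps {X : Type*} {k : ℕ} (f : Fin k → X → X) (V : Set X)
    (hV : ∀ i, f i '' V ⊆ V) :
    ∀ {n : ℕ} (ω : Fin n → Fin k), wordComp f ω '' V ⊆ V := by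
  intro n
  induction n with
  | zero => intro ω; simp [wc_zero]
  | succ n ih =>
    intro ω
    rw [wc_succ, image_comp]
    exact (image_mono (ih _)).trans (hV _)

theorem wc_cover {X : Type*} {k : ℕ} (f : Fin k → X → X) (K : Set X)
    (hK : K = ⋃ i, f i '' K) (n : ℕ) :
    ∀ x ∈ K, ∃ ω : Fin n → Fin k, x ∈ wordComp f ω '' K := by
  induction n with
  | zero => intro x hx; exact ⟨Fin.elim0, by simpa [wc_zero] using hx⟩
  | succ n ih =>
    intro x hx
    rw [hK] at hx
    obtain ⟨i, y, hy, rfl⟩ := mem_iUnion.1 hx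
    obtain ⟨ω, z, hz, rfl⟩ := ih y hy
    refine ⟨Fin.cons i ω, z, hz, ?_⟩
    rw [wc_succ]
    simp

theorem sim_surj {d : ℕ} (g : EuclideanSpace ℝ (Fin d) → EuclideanSpace ℝ (Fin d)) (c : ℝ)
    (hc : 0 < c) (hg : IsSimilarity g c) : Function.Surjective g := by
  have hi : Isometry (fun x => c⁻¹ • g x) := by
    refine Isometry.of_dist_eq fun x y => ?_
    rw [dist_smul₀, hg, Real.norm_of_nonneg (by positivity)]
    field_simp
  let A := hi.affineIsometryOfStrictConvexSpace
  have hs : Function.Surjective A := by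
    have h1 : Function.Injective A.linear := by
      simpa using A.linearIsometry.injective
    have h2 : Function.Surjective A.linear := LinearMap.injective_iff_surjective.1 h1
    exact (AffineMap.linear_surjective_iff A.toAffineMap).1 h2
  intro y
  obtain ⟨x, hx⟩ := hs (c⁻¹ • y)
  refine ⟨x, ?_⟩
  have : c⁻¹ • g x = c⁻¹ • y := hx
  exact smul_right_injective _ (inv_ne_zero hc.ne') this

theorem sep {d k : ℕ}
    (f : Fin k → EuclideanSpace ℝ (Fin d) → EuclideanSpace ℝ (Fin d))
    (c : ℝ) (hc : 0 < c) (hf : ∀ i, IsSimilarity (f i) c)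
    (V : Set (EuclideanSpace ℝ (Fin d))) (hV : ∀ i, f i '' V ⊆ V)
    (hd : Pairwise fun i j => Disjoint (f i '' V) (f j '' V))
    (a : EuclideanSpace ℝ (Fin d)) (r : ℝ) (hr : 0 < r) (hb : ball a r ⊆ V) (n : ℕ) :
    ∀ ω ω' : Fin n → Fin k, ω ≠ ω' →
      c ^ n * r ≤ dist (wordComp f ω a) (wordComp f ω' a) := by
  induction n with
  | zero => intro ω ω' h; exact absurd (Subsingleton.elim _ _) h
  | succ n ih =>
    intro ω ω' h
    by_cases h0 : ω 0 = ω' 0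
    · have ht : Fin.tail ω ≠ Fin.tail ω' := by
        intro ht
        apply h
        rw [← Fin.cons_self_tail ω, ← Fin.cons_self_tail ω', h0, ht]
      have := ih _ _ ht
      rw [wc_succ, wc_succ, h0, Function.comp, Function.comp, hf, pow_succ]
      nlinarith
    · by_contra hlt
      push Not at hlt
      have hs := wc_sim f c hf ω
      obtain ⟨z, hz⟩ := sim_surj _ _ (by positivity) hs (wordComp f ω' a)
      rw [← hz, hs] at hlt
      have hzr : dist a z < r := lt_of_mul_lt_mul_left hlt (by positivity)
      have hzV : z ∈ V := hb (by rwa [mem_ball, dist_comm])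
      have haV : a ∈ V := hb (mem_ball_self hr)
      refine (Set.disjoint_left.1 (hd h0) : ∀ ⦃u⦄, _ → _) (?_ : wordComp f ω z ∈ _) ?_
      · rw [wc_succ]
        exact mem_image_of_mem _ (wc_maps f V hV _ (mem_image_of_mem _ hzV))
      · rw [hz, wc_succ]
        exact mem_image_of_mem _ (wc_maps f V hV _ (mem_image_of_mem _ haV))

theorem sep_bound {E : Type*} [NormedAddCommGroup E] [NormedSpace ℝ E] [FiniteDimensional ℝ E]
    (R r : ℝ) (hr : 0 < r) : ∃ M : ℕ, 0 < M ∧ ∀ {ι : Type} (S : Finset ι) (p : ι → E) (y : E)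
      (s : ℝ), 0 < s → (∀ i ∈ S, dist (p i) y ≤ s * R) →
      (∀ i ∈ S, ∀ j ∈ S, i ≠ j → s * r ≤ dist (p i) (p j)) → S.card ≤ M := by
  classical
  have hcp : IsCompact (closedBall (0 : E) R) := isCompact_closedBall _ _
  obtain ⟨t, ht, hcov⟩ := Metric.totallyBounded_iff.1 hcp.totallyBounded (r/2) (by positivity)
  refine ⟨ht.toFinset.card + 1, by omega, fun S p y s hs h1 h2 => ?_⟩
  have h3 : ∀ i ∈ S, ∃ z ∈ t, dist (s⁻¹ • (p i - y)) z < r/2 := by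
    intro i hi
    have : s⁻¹ • (p i - y) ∈ closedBall (0 : E) R := by
      rw [mem_closedBall_zero_iff, norm_smul, Real.norm_of_nonneg (by positivity), ← dist_eq_norm,
        inv_mul_le_iff₀ hs]
      exact h1 i hi
    simpa using hcov this
  choose! q hq hq' using h3
  refine (Finset.card_le_card_of_injOn (t := ht.toFinset) q (fun i hi => by simpa using hq i hi)
    ?_).trans (Nat.le_succ _)
  intro i hi j hj hij
  by_contra hne
  have a1 := hq' i hi
  have a2 := hq' j hj
  rw [← hij] at a2
  have a3 := dist_triangle_right (s⁻¹ • (p i - y)) (s⁻¹ • (p j - y)) (q i)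
  rw [dist_smul₀, Real.norm_of_nonneg (by positivity), dist_sub_right] at a3
  have a4 := h2 i hi j hj hne
  have a5 : r ≤ s⁻¹ * dist (p i) (p j) := by rwa [le_inv_mul_iff₀ hs]
  linarith

theorem pack_le {X : Type*} [MetricSpace X] {k : ℕ} (hk : 0 < k) (f : Fin k → X → X) (c : ℝ)
    (hc : 0 < c) (hf : ∀ i, IsSimilarity (f i) c) (K : Set X) (hcpt : IsCompact K)
    (hK : K = ⋃ i, f i '' K) (n : ℕ) (δ : ℝ) (hn : c ^ n * Metric.diam K ≤ δ)
    (t : Finset X) (ht : ↑t ⊆ K)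
    (hp : (t : Set X).Pairwise fun x y => Disjoint (Metric.closedBall x δ) (Metric.closedBall y δ)) :
    t.card ≤ k ^ n := by
  have h := wc_cover f K hK n
  haveI : Nonempty (Fin n → Fin k) := ⟨fun _ => ⟨0, hk⟩⟩
  choose! q hq using h
  have := Finset.card_le_card_of_injOn (s := t) (t := Finset.univ) q (fun _ _ => by simp) ?_
  · simpa using this
  intro x hx y hy hxy
  by_contra hne
  have a1 := hq x (ht hx)
  have a2 := hq y (ht hy)
  rw [← hxy] at a2
  obtain ⟨u, hu, hu'⟩ := a1
  obtain ⟨v, hv, hv'⟩ := a2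
  have hd : dist x y ≤ δ := by
    rw [← hu', ← hv', wc_sim f c hf]
    refine le_trans ?_ hn
    gcongr
    exact dist_le_diam_of_mem hcpt.isBounded hu hv
  refine (Set.disjoint_left.1 (hp hx hy hne) : ∀ ⦃u⦄, _ → _) (?_ : x ∈ _) (by simpa using hd)
  exact mem_closedBall_self (dist_nonneg.trans hd)

theorem pack_spec {X : Type*} [MetricSpace X] (K : Set X) (δ : ℝ) (B : ℕ)
    (hB : ∀ t : Finset X, ↑t ⊆ K → ((t : Set X).Pairwise fun x y =>
      Disjoint (Metric.closedBall x δ) (Metric.closedBall y δ)) → t.card ≤ B) :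
    (∃ t : Finset X, t.card = packingNum K δ ∧ ↑t ⊆ K ∧ (t : Set X).Pairwise fun x y =>
      Disjoint (Metric.closedBall x δ) (Metric.closedBall y δ)) ∧
    ∀ t : Finset X, ↑t ⊆ K → ((t : Set X).Pairwise fun x y =>
      Disjoint (Metric.closedBall x δ) (Metric.closedBall y δ)) → t.card ≤ packingNum K δ := by
  have hbd : BddAbove {m : ℕ | ∃ t : Finset X, t.card = m ∧ ↑t ⊆ K ∧
    (t : Set X).Pairwise fun x y => Disjoint (Metric.closedBall x δ) (Metric.closedBall y δ)} :=
    ⟨B, by rintro m ⟨t, rfl, h1, h2⟩; exact hB t h1 h2⟩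
  have hn0 : {m : ℕ | ∃ t : Finset X, t.card = m ∧ ↑t ⊆ K ∧
    (t : Set X).Pairwise fun x y =>
      Disjoint (Metric.closedBall x δ) (Metric.closedBall y δ)}.Nonempty :=
    ⟨0, ∅, by simp⟩
  exact ⟨Nat.sSup_mem hn0 hbd, fun t h1 h2 => le_csSup hbd ⟨t, rfl, h1, h2⟩⟩

theorem pack_lower {d k : ℕ} (hk : 0 < k)
    (f : Fin k → EuclideanSpace ℝ (Fin d) → EuclideanSpace ℝ (Fin d))
    (c : ℝ) (hc : c ∈ Set.Ioo (0 : ℝ) 1)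
    (hf : ∀ i, IsSimilarity (f i) c) (hosc : OSC f)
    (K : Set (EuclideanSpace ℝ (Fin d))) (hne : K.Nonempty) (hcpt : IsCompact K)
    (hK : K = ⋃ i, f i '' K) :
    ∃ M : ℕ, 0 < M ∧ ∀ (n : ℕ) (δ : ℝ), 0 < δ → δ ≤ c ^ n → k ^ n ≤ M * packingNum K δ := by
  classical
  obtain ⟨hc0, hc1⟩ := hc
  obtain ⟨V, ⟨a, haV⟩, hVo, -, hVf, hVd⟩ := hosc
  obtain ⟨r, hr, hb⟩ := Metric.isOpen_iff.1 hVo a haV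
  obtain ⟨x0, hx0⟩ := hne
  obtain ⟨M, hM, hS⟩ := sep_bound (E := EuclideanSpace ℝ (Fin d)) (dist a x0 + 2) r hr
  refine ⟨M, hM, fun n δ hδ hn => ?_⟩
  have hmn : ∃ m : ℕ, c ^ m * Metric.diam K ≤ δ := by
    have : Tendsto (fun m : ℕ => c ^ m * Metric.diam K) atTop (𝓝 (0 * Metric.diam K)) :=
      (tendsto_pow_atTop_nhds_zero_of_lt_one hc0.le hc1).mul_const _
    rw [zero_mul] at this
    exact (this.eventually (eventually_le_nhds hδ)).exists
  obtain ⟨m, hm⟩ := hmn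
  obtain ⟨⟨t, htc, htK, htp⟩, hmax⟩ := pack_spec K δ (k ^ m)
    (fun t h1 h2 => pack_le hk f c hc0 hf K hcpt hK m δ hm t h1 h2)
  have hKK : ∀ i, f i '' K ⊆ K := fun i => by
    conv_rhs => rw [hK]
    exact subset_iUnion (fun i => f i '' K) i
  have key : ∀ x ∈ K, ∃ y ∈ t, dist x y ≤ 2 * δ := by
    intro x hx
    by_contra hcon
    push Not at hcon
    have hxt : x ∉ t := fun h => by
      have := hcon x h
      rw [dist_self] at this
      linarith
    have := hmax (insert x t) (by
      rw [Finset.coe_insert]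
      exact Set.insert_subset hx htK) (by
      rw [Finset.coe_insert]
      refine htp.insert fun y hy _ => ?_
      have : Disjoint (closedBall x δ) (closedBall y δ) :=
        closedBall_disjoint_closedBall (by linarith [hcon y hy])
      exact ⟨this, this.symm⟩)
    rw [Finset.card_insert_of_notMem hxt] at this
    omega
  have key2 : ∀ ω : Fin n → Fin k, ∃ y ∈ t, dist (wordComp f ω x0) y ≤ 2 * δ := fun ω =>
    key _ (wc_maps f K hKK ω (mem_image_of_mem _ hx0))
  choose q hq hq' using key2
  have hcard := Finset.card_le_mul_card_image_of_maps_to (s := (Finset.univ : Finset (Fin n → Fin k)))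
    (t := t) (f := q) (fun ω _ => hq ω) M ?_
  · rw [htc] at hcard
    simpa using hcard
  intro y hy
  refine hS _ (fun ω => wordComp f ω a) y (c ^ n) (by positivity) ?_ ?_
  · intro ω hω
    have h1 : q ω = y := by simpa using hω
    have h2 := hq' ω
    rw [h1] at h2
    have h3 := dist_triangle (wordComp f ω a) (wordComp f ω x0) y
    rw [wc_sim f c hf] at h3
    show dist (wordComp f ω a) y ≤ _
    linarith
  · intro ω _ ω' _ h
    exact sep f c hc0 hf V hVf hVd a r hr hb n ω ω' h

/-- under the OSC and a common factor `c`, the fractal dimension II of the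
attractor exists, equals its box dimension, and both equal `-log k / log c`. -/
theorem dim2_eq_box_dim {d k : ℕ} (hk : 0 < k)
    (f : Fin k → EuclideanSpace ℝ (Fin d) → EuclideanSpace ℝ (Fin d))
    (c : ℝ) (hc : c ∈ Set.Ioo (0 : ℝ) 1)
    (hf : ∀ i, IsSimilarity (f i) c) (hosc : OSC f)
    (K : Set (EuclideanSpace ℝ (Fin d))) (hne : K.Nonempty) (hcpt : IsCompact K)
    (hK : K = ⋃ i, f i '' K) (hdiam : 0 < Metric.diam K) :
    Filter.Tendsto (fun n : ℕ => Real.log (levelCount f K n) / (-Real.log (deltaLevel f K n)))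
        Filter.atTop (𝓝 (-Real.log k / Real.log c)) ∧
      Filter.Tendsto (fun δ : ℝ => Real.log (packingNum K δ) / (-Real.log δ))
        (𝓝[>] (0 : ℝ)) (𝓝 (-Real.log k / Real.log c)) := by
  obtain ⟨hc0, hc1⟩ := hc
  have hKK : ∀ i, f i '' K ⊆ K := fun i => by
    conv_rhs => rw [hK]
    exact subset_iUnion (fun i => f i '' K) i
  have hlc : Real.log c < 0 := Real.log_neg hc0 hc1
  have hk1 : (1 : ℝ) ≤ k := by exact_mod_cast hk
  have hlk : 0 ≤ Real.log k := Real.log_nonneg hk1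
  have hmeet : ∀ {n : ℕ} (ω : Fin n → Fin k), ((wordComp f ω '' K) ∩ K).Nonempty := by
    intro n ω
    rw [inter_eq_left.2 (wc_maps f K hKK ω)]
    exact hne.image _
  constructor
  · have h1 : ∀ n, levelCount f K n = k ^ n := by
      intro n
      simp [levelCount, hmeet, Set.ncard_univ]
    have h2 : ∀ n, deltaLevel f K n = c ^ n * Metric.diam K := by
      intro n
      have hd : ∀ ω : Fin n → Fin k, Metric.diam (wordComp f ω '' K) = c ^ n * Metric.diam K := by
        intro ω
        have hs := wc_sim f c hf ω
        apply le_antisymm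
        · refine diam_le_of_forall_dist_le (by positivity) ?_
          rintro _ ⟨x, hx, rfl⟩ _ ⟨y, hy, rfl⟩
          rw [hs]
          gcongr
          exact dist_le_diam_of_mem hcpt.isBounded hx hy
        · rw [← le_div_iff₀' (by positivity)]
          refine diam_le_of_forall_dist_le (by positivity) ?_
          intro x hx y hy
          rw [le_div_iff₀' (by positivity), ← hs]
          exact dist_le_diam_of_mem (hcpt.isBounded.subset (wc_maps f K hKK ω))
            (mem_image_of_mem _ hx) (mem_image_of_mem _ hy)
      have : {d : ℝ | ∃ ω : Fin n → Fin k, ((wordComp f ω '' K) ∩ K).Nonempty ∧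
          d = Metric.diam (wordComp f ω '' K)} = {c ^ n * Metric.diam K} := by
        ext x
        simp only [hmeet, hd, true_and, mem_ofPred_eq, mem_singleton_iff]
        exact ⟨fun ⟨_, h⟩ => h, fun h => ⟨fun _ => ⟨0, hk⟩, h⟩⟩
      rw [deltaLevel, this, csSup_singleton]
    have h3 : Tendsto (fun n : ℕ => Real.log k / (-Real.log c - Real.log (Metric.diam K) / n))
        atTop (𝓝 (Real.log k / (-Real.log c - 0))) := by
      refine Tendsto.div tendsto_const_nhds (tendsto_const_nhds.sub ?_) (by linarith)
      exact tendsto_const_nhds.div_atTop tendsto_natCast_atTop_atTop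
    have h4 : Real.log k / (-Real.log c - 0) = -Real.log k / Real.log c := by
      rw [sub_zero, div_neg, neg_div]
    rw [h4] at h3
    refine h3.congr' ?_
    filter_upwards [eventually_gt_atTop 0] with n hn
    have hn' : (n : ℝ) ≠ 0 := by positivity
    rw [h1, h2, Real.log_mul (by positivity) hdiam.ne', Real.log_pow]
    push_cast
    rw [Real.log_pow, ← mul_div_mul_left _ _ hn']
    congr 1
    field_simp
    ring
  · obtain ⟨M, hM, hlow⟩ := pack_lower hk f c ⟨hc0, hc1⟩ hf hosc K hne hcpt hK
    have hL : Tendsto (fun δ : ℝ => -Real.log δ) (𝓝[>] 0) atTop :=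
      tendsto_neg_atBot_atTop.comp Real.tendsto_log_nhdsGT_zero
    set ℓ := -Real.log c with hℓ
    have hℓ0 : 0 < ℓ := by linarith
    set D := Metric.diam K with hD
    have hlim : ∀ C : ℝ, Tendsto (fun δ : ℝ => Real.log k / ℓ + C / (-Real.log δ)) (𝓝[>] 0)
        (𝓝 (-Real.log k / Real.log c)) := by
      intro C
      have : -Real.log k / Real.log c = Real.log k / ℓ + 0 := by
        rw [hℓ, div_neg, neg_div, add_zero]
      rw [this]
      exact tendsto_const_nhds.add (tendsto_const_nhds.div_atTop hL)
    refine tendsto_of_tendsto_of_tendsto_of_le_of_le' (hlim (-Real.log k - Real.log M))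
      (hlim ((Real.log D / ℓ + 1) * Real.log k)) ?_ ?_
    · filter_upwards [hL.eventually_gt_atTop 0, self_mem_nhdsWithin] with δ hδL hδ
      have hδ0 : 0 < δ := hδ
      set n := ⌊-Real.log δ / ℓ⌋₊ with hn
      have hn1 : (n : ℝ) ≤ -Real.log δ / ℓ := Nat.floor_le (by positivity)
      have hn2 : -Real.log δ / ℓ < n + 1 := Nat.lt_floor_add_one _
      have hle : δ ≤ c ^ n := by
        rw [← Real.log_le_log_iff hδ0 (by positivity), Real.log_pow]
        rw [le_div_iff₀ hℓ0] at hn1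
        nlinarith
      have h := hlow n δ hδ0 hle
      have hN : 0 < packingNum K δ := by
        rcases Nat.eq_zero_or_pos (packingNum K δ) with h0 | h0
        · rw [h0] at h
          have : 0 < k ^ n := by positivity
          omega
        · exact h0
      have h' : (k : ℝ) ^ n ≤ M * packingNum K δ := by exact_mod_cast h
      have h'' := Real.log_le_log (by positivity) h'
      rw [Real.log_pow, Real.log_mul (by positivity) (by positivity)] at h''
      rw [le_div_iff₀ hδL, add_mul, div_mul_cancel₀ _ hδL.ne']
      have : Real.log k / ℓ * -Real.log δ = (-Real.log δ / ℓ) * Real.log k := by ring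
      rw [this]
      nlinarith
    · filter_upwards [hL.eventually_gt_atTop 0, hL.eventually_gt_atTop (-Real.log D),
        self_mem_nhdsWithin] with δ hδL hδD hδ
      have hδ0 : 0 < δ := hδ
      set n := ⌈(-Real.log δ + Real.log D) / ℓ⌉₊ with hn
      have hn1 : (-Real.log δ + Real.log D) / ℓ ≤ n := Nat.le_ceil _
      have hn2 : (n : ℝ) < (-Real.log δ + Real.log D) / ℓ + 1 :=
        Nat.ceil_lt_add_one (div_nonneg (by linarith) hℓ0.le)
      have hle : c ^ n * D ≤ δ := by
        rw [← Real.log_le_log_iff (by positivity) hδ0, Real.log_mul (by positivity) hdiam.ne',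
          Real.log_pow]
        rw [div_le_iff₀ hℓ0] at hn1
        nlinarith
      have hB := fun t h1 h2 => pack_le hk f c hc0 hf K hcpt hK n δ hle t h1 h2
      obtain ⟨⟨t, htc, htK, htp⟩, -⟩ := pack_spec K δ (k ^ n) hB
      have h := hB t htK htp
      rw [htc] at h
      have hlog : Real.log (packingNum K δ) ≤ n * Real.log k := by
        rcases Nat.eq_zero_or_pos (packingNum K δ) with h0 | h0
        · rw [h0]
          simp only [Nat.cast_zero, Real.log_zero]
          positivity
        · rw [← Real.log_pow]
          exact Real.log_le_log (by exact_mod_cast h0) (by exact_mod_cast h)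
      rw [div_le_iff₀ hδL, add_mul, div_mul_cancel₀ _ hδL.ne']
      have : Real.log k / ℓ * -Real.log δ + (Real.log D / ℓ + 1) * Real.log k
        = ((-Real.log δ + Real.log D) / ℓ + 1) * Real.log k := by ring
      rw [this]
      exact hlog.trans (by gcongr)
end
end

section
/- Let F = {f₁,…,f_k} be an IFS of similarities on ℝ^d satisfying the open set condition with factors c_i ∈ (0,1) and attractor K of positive diameter, equipped with its natural fractal structure. Then dim³(K) = dim_B(K) = dim_H(K), where dim³ is the fractal dimension III with respect to the natural fractal structure, dim_B is box dimension, and dim_H is Hausdorff dimension; all equal the unique s with ∑_i c_i^s = 1. -/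
open Metric Set Filter Topology MeasureTheory ENNReal NNReal

noncomputable section

section Aux

variable {d k : ℕ}

local notation "𝔼" => EuclideanSpace ℝ (Fin d)

open scoped Classical in
/-- Total weight of the cylinders of relative level `n` below `g` which meet `B`. -/
def wt {X : Type*} (f : Fin k → X → X) (c : Fin k → ℝ) (s : ℝ) (K B : Set X) :
    ℕ → (X → X) → ℝ → ℝ
  | 0, g, r => if (g '' K ∩ B).Nonempty then r ^ s else 0
  | n + 1, g, r => ∑ i, wt f c s K B n (g ∘ f i) (r * c i)

lemma wt_nonneg {X : Type*} (f : Fin k → X → X) (c : Fin k → ℝ) (hc : ∀ i, 0 < c i)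
    (s : ℝ) (K B : Set X) (n : ℕ) (g : X → X) (r : ℝ) (hr : 0 < r) :
    0 ≤ wt f c s K B n g r := by
  induction n generalizing g r with
  | zero => simp only [wt]; split_ifs <;> positivity
  | succ n ih =>
    simp only [wt]
    exact Finset.sum_nonneg fun i _ => ih _ _ (mul_pos hr (hc i))

lemma sum_mul_rpow (c : Fin k → ℝ) (hc : ∀ i, 0 < c i) (s : ℝ) (hsum : ∑ i, c i ^ s = 1)
    (r : ℝ) (hr : 0 < r) : ∑ i, (r * c i) ^ s = r ^ s := by
  simp_rw [fun i => Real.mul_rpow (z := s) hr.le (hc i).le]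
  rw [← Finset.mul_sum, hsum, mul_one]

lemma wt_le {X : Type*} (f : Fin k → X → X) (c : Fin k → ℝ) (hc : ∀ i, 0 < c i)
    (s : ℝ) (hsum : ∑ i, c i ^ s = 1) (K B : Set X) (n : ℕ) (g : X → X) (r : ℝ) (hr : 0 < r) :
    wt f c s K B n g r ≤ r ^ s := by
  induction n generalizing g r with
  | zero => simp only [wt]; split_ifs; exacts [le_rfl, by positivity]
  | succ n ih =>
    simp only [wt]
    rw [← sum_mul_rpow c hc s hsum r hr]
    exact Finset.sum_le_sum fun i _ => ih _ _ (mul_pos hr (hc i))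

lemma wt_eq_zero {X : Type*} (f : Fin k → X → X) (c : Fin k → ℝ)
    (s : ℝ) (K B : Set X) (hK : ∀ i, f i '' K ⊆ K) (n : ℕ) (g : X → X) (r : ℝ)
    (h : ¬ (g '' K ∩ B).Nonempty) :
    wt f c s K B n g r = 0 := by
  induction n generalizing g r with
  | zero => simp only [wt]; rw [if_neg h]
  | succ n ih =>
    simp only [wt]
    refine Finset.sum_eq_zero fun i _ => ih _ _ fun h' => h ?_
    refine h'.mono (inter_subset_inter_left _ ?_)
    rw [image_comp]
    exact image_mono (hK i)

lemma wt_cover {X ι : Type*} (f : Fin k → X → X) (c : Fin k → ℝ) (hc : ∀ i, 0 < c i)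
    (s : ℝ) (hsum : ∑ i, c i ^ s = 1) (K : Set X) (hne : K.Nonempty) (hK : ∀ i, f i '' K ⊆ K)
    (J : Finset ι) (B : ι → Set X) (n : ℕ) (g : X → X) (r : ℝ) (hr : 0 < r)
    (hcov : g '' K ⊆ ⋃ j ∈ J, B j) :
    r ^ s ≤ ∑ j ∈ J, wt f c s K (B j) n g r := by
  induction n generalizing g r with
  | zero =>
    obtain ⟨x, hx⟩ := hne
    have := hcov (mem_image_of_mem g hx)
    simp only [mem_iUnion] at this
    obtain ⟨j, hj, hxj⟩ := this
    refine le_trans ?_ (Finset.single_le_sum (f := fun j => wt f c s K (B j) 0 g r)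
      (fun j _ => wt_nonneg f c hc s K (B j) 0 g r hr) hj)
    simp only [wt]
    rw [if_pos ⟨g x, mem_image_of_mem g hx, hxj⟩]
  | succ n ih =>
    simp only [wt]
    rw [Finset.sum_comm, ← sum_mul_rpow c hc s hsum r hr]
    refine Finset.sum_le_sum fun i _ => ih _ _ (mul_pos hr (hc i)) ?_
    refine Subset.trans ?_ hcov
    rw [image_comp]
    exact image_mono (hK i)

lemma sim_comp {X : Type*} [MetricSpace X] {g h : X → X} {a b : ℝ} (hg : IsSimilarity g a)
    (hh : IsSimilarity h b) : IsSimilarity (g ∘ h) (a * b) := by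
  intro x y
  simp only [Function.comp, hg _ _, hh _ _, mul_assoc]

lemma sim_inj {X : Type*} [MetricSpace X] {g : X → X} {a : ℝ} (hg : IsSimilarity g a)
    (ha : 0 < a) : Function.Injective g := by
  intro x y h
  have := hg x y
  rw [h, dist_self] at this
  have h2 : dist x y = 0 := by
    rcases mul_eq_zero.1 this.symm with h | h
    · linarith
    · exact h
  exact dist_eq_zero.1 h2

lemma sim_lip {X : Type*} [MetricSpace X] {g : X → X} {a : ℝ} (hg : IsSimilarity g a)
    (ha : 0 < a) : LipschitzWith ⟨a, ha.le⟩ g :=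
  LipschitzWith.of_dist_le_mul fun x y => (hg x y).le

lemma sim_antilip {X : Type*} [MetricSpace X] {g : X → X} {a : ℝ} (hg : IsSimilarity g a)
    (ha : 0 < a) : AntilipschitzWith ⟨a⁻¹, (inv_pos.2 ha).le⟩ g :=
  AntilipschitzWith.of_le_mul_dist fun x y => by
    rw [hg x y]
    change _ ≤ a⁻¹ * _
    rw [inv_mul_cancel_left₀ ha.ne']

lemma sim_measure {g : 𝔼 → 𝔼} {a : ℝ} (hg : IsSimilarity g a) (ha : 0 < a) (V : Set 𝔼)
    (hV : Bornology.IsBounded V) :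
    a ^ d * (μH[(Module.finrank ℝ 𝔼 : ℝ)] : Measure 𝔼).real V ≤
      (μH[(Module.finrank ℝ 𝔼 : ℝ)] : Measure 𝔼).real (g '' V) := by
  have h := (sim_antilip hg ha).le_hausdorffMeasure_image
    (d := (Module.finrank ℝ 𝔼 : ℝ)) (by positivity) V
  have hfin : (μH[(Module.finrank ℝ 𝔼 : ℝ)] : Measure 𝔼) (g '' V) ≠ ∞ :=
    ((sim_lip hg ha).isBounded_image hV).measure_lt_top.ne
  have h2 := ENNReal.toReal_mono (ENNReal.mul_ne_top (by finiteness) hfin) h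
  rw [ENNReal.toReal_mul] at h2
  simp only [Measure.real] at *
  rw [ENNReal.rpow_natCast, ENNReal.toReal_pow] at h2
  simp only [finrank_euclideanSpace, Fintype.card_fin] at h2 ⊢
  change _ ≤ (a⁻¹) ^ d * _ at h2
  calc _ ≤ a ^ d * _ := mul_le_mul_of_nonneg_left h2 (by positivity)
    _ = _ := by rw [← mul_assoc, ← mul_pow, mul_inv_cancel₀ ha.ne', one_pow, one_mul]

lemma mass_ind (f : Fin k → 𝔼 → 𝔼) (c : Fin k → ℝ) (hc : ∀ i, 0 < c i)
    (hf : ∀ i, IsSimilarity (f i) (c i)) (K : Set 𝔼) (hK : ∀ i, f i '' K ⊆ K)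
    (s : ℝ) (hs : 0 ≤ s) (hsum : ∑ i, c i ^ s = 1)
    (V : Set 𝔼) (hVo : IsOpen V) (hVb : Bornology.IsBounded V) (hVf : ∀ i, f i '' V ⊆ V)
    (hVd : Pairwise fun i j => Disjoint (f i '' V) (f j '' V))
    (a b : ℝ) (ha : 0 < a) (hab : ∀ i, a ≤ c i) (hb : ∀ i, c i ≤ b) (hb0 : 0 < b)
    (E : ℝ) (hE : ∀ v ∈ V, ∀ y ∈ K, dist v y ≤ E) (x : 𝔼) (ρ : ℝ) (hρ : 0 < ρ)
    (n : ℕ) (g : 𝔼 → 𝔼) (r : ℝ) (hr : 0 < r) (hg : IsSimilarity g r)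
    (h1 : a * ρ ≤ r) (h2 : b ^ n * r ≤ ρ) :
    wt f c s K (ball x ρ) n g r *
      (a ^ d * (μH[(Module.finrank ℝ 𝔼 : ℝ)] : Measure 𝔼).real V * ρ ^ d) ≤
    ρ ^ s * (μH[(Module.finrank ℝ 𝔼 : ℝ)] : Measure 𝔼).real
      (g '' V ∩ closedBall x ((E + 1) * ρ)) := by
  set μ := (μH[(Module.finrank ℝ 𝔼 : ℝ)] : Measure 𝔼) with hμ
  have small : ∀ n (g : 𝔼 → 𝔼) (r : ℝ), 0 < r → IsSimilarity g r → a * ρ ≤ r → r ≤ ρ →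
      wt f c s K (ball x ρ) n g r * (a ^ d * μ.real V * ρ ^ d) ≤
      ρ ^ s * μ.real (g '' V ∩ closedBall x ((E + 1) * ρ)) := by
    intro n g r hr hg h1 h2
    by_cases hm : (g '' K ∩ ball x ρ).Nonempty
    · obtain ⟨_, ⟨y, hy, rfl⟩, hyx⟩ := hm
      have hsub : g '' V ⊆ closedBall x ((E + 1) * ρ) := by
        rintro _ ⟨v, hv, rfl⟩
        have e1 := hE v hv y hy
        have e2 : dist (g v) (g y) ≤ ρ * E := by
          rw [hg]
          exact mul_le_mul h2 e1 dist_nonneg hρ.le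
        have e3 := mem_ball.1 hyx
        have e4 := dist_triangle (g v) (g y) x
        rw [mem_closedBall]
        nlinarith
      rw [inter_eq_left.2 hsub]
      have e5 := sim_measure hg hr V hVb
      have e6 : wt f c s K (ball x ρ) n g r ≤ ρ ^ s :=
        (wt_le f c hc s hsum K _ n g r hr).trans (Real.rpow_le_rpow hr.le h2 hs)
      refine mul_le_mul e6 ?_ (by positivity) (by positivity)
      refine le_trans ?_ e5
      rw [mul_right_comm, ← mul_pow]
      gcongr
    · rw [wt_eq_zero f c s K _ hK n g r hm, zero_mul]
      positivity
  induction n generalizing g r with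
  | zero => exact small 0 g r hr hg h1 (by simpa using h2)
  | succ n ih =>
    by_cases hrρ : r ≤ ρ
    · exact small _ g r hr hg h1 hrρ
    · push Not at hrρ
      simp only [wt]
      rw [Finset.sum_mul]
      have hlt : ∀ W : Set 𝔼, μ (W ∩ closedBall x ((E + 1) * ρ)) ≠ ∞ := fun W =>
        ((measure_mono inter_subset_right).trans_lt
          (isBounded_closedBall (x := x) (r := (E + 1) * ρ)).measure_lt_top).ne
      have hU : μ.real (⋃ i, ((g ∘ f i) '' V ∩ closedBall x ((E + 1) * ρ))) =
          ∑ i, μ.real ((g ∘ f i) '' V ∩ closedBall x ((E + 1) * ρ)) := by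
        refine measureReal_iUnion_fintype ?_ ?_ (fun i => hlt _)
        · intro i j hij
          refine Disjoint.mono inter_subset_left inter_subset_left ?_
          rw [image_comp, image_comp]
          exact (disjoint_image_iff (sim_inj hg hr)).2 (hVd hij)
        · intro i
          have hs' := sim_comp hg (hf i)
          have hp := mul_pos hr (hc i)
          exact (hVo.measurableSet.image_of_continuousOn_injOn
            (sim_lip hs' hp).continuous.continuousOn (sim_inj hs' hp).injOn).inter
            isClosed_closedBall.measurableSet
      calc _ ≤ ∑ i, ρ ^ s * μ.real ((g ∘ f i) '' V ∩ closedBall x ((E + 1) * ρ)) := by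
            refine Finset.sum_le_sum fun i _ => ?_
            refine ih (g ∘ f i) (r * c i) (mul_pos hr (hc i)) (sim_comp hg (hf i)) ?_ ?_
            · rw [mul_comm a]
              exact mul_le_mul hrρ.le (hab i) ha.le hr.le
            · refine le_trans ?_ h2
              rw [pow_succ, mul_assoc, mul_comm r]
              have := hb i
              gcongr
        _ = ρ ^ s * μ.real (⋃ i, ((g ∘ f i) '' V ∩ closedBall x ((E + 1) * ρ))) := by
            rw [hU, Finset.mul_sum]
        _ ≤ _ := by
            refine mul_le_mul_of_nonneg_left (measureReal_mono ?_ (hlt _)) (by positivity)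
            refine iUnion_subset fun i => inter_subset_inter_left _ ?_
            rw [image_comp]
            exact image_mono (hVf i)

lemma exists_bounds (c : Fin k → ℝ) (hc : ∀ i, c i ∈ Set.Ioo (0 : ℝ) 1) (s : ℝ)
    (hsum : ∑ i, c i ^ s = 1) :
    ∃ a b : ℝ, 0 < a ∧ a < 1 ∧ 0 < b ∧ b < 1 ∧ (∀ i, a ≤ c i) ∧ ∀ i, c i ≤ b := by
  have : Nonempty (Fin k) := by
    by_contra h
    rw [not_nonempty_iff] at h
    simp at hsum
  obtain ⟨i, hi⟩ := Finite.exists_min c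
  obtain ⟨j, hj⟩ := Finite.exists_max c
  exact ⟨c i, c j, (hc i).1, (hc i).2, (hc j).1, (hc j).2, hi, hj⟩

lemma mass_cover (f : Fin k → 𝔼 → 𝔼) (c : Fin k → ℝ) (hc : ∀ i, c i ∈ Set.Ioo (0 : ℝ) 1)
    (hf : ∀ i, IsSimilarity (f i) (c i)) (hosc : OSC f)
    (K : Set 𝔼) (hne : K.Nonempty) (hcpt : IsCompact K) (hK : ∀ i, f i '' K ⊆ K)
    (s : ℝ) (hs : 0 ≤ s) (hsum : ∑ i, c i ^ s = 1) :
    ∃ q : ℝ, 0 < q ∧ ∀ {ι : Type} (J : Finset ι) (x : ι → 𝔼) (ρ : ι → ℝ), (∀ j ∈ J, 0 < ρ j) →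
      K ⊆ ⋃ j ∈ J, ball (x j) (ρ j) → 1 ≤ q * ∑ j ∈ J, ρ j ^ s := by
  obtain ⟨V, hVne, hVo, hVb, hVf, hVd⟩ := hosc
  obtain ⟨a, b, ha, ha1, hb0, hb1, hab, hb⟩ := exists_bounds c hc s hsum
  obtain ⟨E, hE⟩ := Metric.isBounded_iff.1 (hVb.union hcpt.isBounded)
  have hE' : ∀ v ∈ V, ∀ y ∈ K, dist v y ≤ E := fun v hv y hy => hE (Or.inl hv) (Or.inr hy)
  have hE0 : 0 ≤ E := by
    obtain ⟨v, hv⟩ := hVne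
    obtain ⟨y, hy⟩ := hne
    exact dist_nonneg.trans (hE' v hv y hy)
  have hc0 : ∀ i, 0 < c i := fun i => (hc i).1
  set μ := (μH[(Module.finrank ℝ 𝔼 : ℝ)] : Measure 𝔼) with hμ
  have hV0 : 0 < μ.real V :=
    ENNReal.toReal_pos (hVo.measure_pos μ hVne).ne' hVb.measure_lt_top.ne
  have hm : 0 < a ^ d * μ.real V := by positivity
  set q : ℝ := (E + 1) ^ d * μ.real (closedBall (0 : 𝔼) 1) / (a ^ d * μ.real V) with hq
  have hq0 : 0 ≤ q := by positivity
  refine ⟨q + 1, by positivity, ?_⟩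
  intro ι J x ρ hρ hcov
  by_cases hbig : ∃ j ∈ J, 1 < ρ j
  · obtain ⟨j, hj, h1⟩ := hbig
    have e1 : 1 ≤ ρ j ^ s := Real.one_le_rpow h1.le hs
    have e2 : ρ j ^ s ≤ ∑ j ∈ J, ρ j ^ s :=
      Finset.single_le_sum (f := fun j => ρ j ^ s)
        (fun j hj => Real.rpow_nonneg (hρ j hj).le _) hj
    nlinarith
  push Not at hbig
  have hev : ∀ᶠ n in atTop, ∀ j ∈ J, b ^ n * 1 ≤ ρ j := by
    rw [Finset.eventually_all]
    intro j hj
    have := tendsto_pow_atTop_nhds_zero_of_lt_one hb0.le hb1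
    filter_upwards [this.eventually (gt_mem_nhds (hρ j hj))] with n hn
    simpa using hn.le
  obtain ⟨n, hn⟩ := hev.exists
  have hid : IsSimilarity (id : 𝔼 → 𝔼) 1 := fun x y => by simp
  have hw := wt_cover f c hc0 s hsum K hne hK J (fun j => ball (x j) (ρ j)) n id 1 one_pos
    (by simpa using hcov)
  rw [Real.one_rpow] at hw
  refine hw.trans ?_
  rw [Finset.mul_sum]
  refine Finset.sum_le_sum fun j hj => ?_
  have hρj := hρ j hj
  have h := mass_ind f c hc0 hf K hK s hs hsum V hVo hVb hVf hVd a b ha hab hb hb0 E hE' (x j)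
    (ρ j) hρj n id 1 one_pos hid
    (by nlinarith [hbig j hj]) (hn j hj)
  have h3 : μ.real (id '' V ∩ closedBall (x j) ((E + 1) * ρ j)) ≤
      ((E + 1) * ρ j) ^ d * μ.real (closedBall (0 : 𝔼) 1) := by
    have := Measure.addHaar_real_closedBall' μ (x j) (r := (E + 1) * ρ j) (by positivity)
    rw [finrank_euclideanSpace_fin] at this
    rw [← this]
    exact measureReal_mono inter_subset_right
      (isBounded_closedBall (x := x j) (r := (E + 1) * ρ j)).measure_lt_top.ne
  have h4 : wt f c s K (ball (x j) (ρ j)) n id 1 * (a ^ d * μ.real V * ρ j ^ d) ≤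
      (q * ρ j ^ s) * (a ^ d * μ.real V * ρ j ^ d) := by
    refine h.trans ((mul_le_mul_of_nonneg_left h3 (by positivity)).trans (le_of_eq ?_))
    rw [hq, mul_pow]
    field_simp
  have h5 := le_of_mul_le_mul_right h4 (by positivity)
  have h6 : 0 ≤ ρ j ^ s := by positivity
  nlinarith

lemma wordComp_succ {X : Type*} (f : Fin k → X → X) {n : ℕ} (ω : Fin (n + 1) → Fin k) :
    wordComp f ω = f (ω 0) ∘ wordComp f (fun i => ω i.succ) := by
  simp [wordComp, List.ofFn_succ]

lemma wordComp_zero {X : Type*} (f : Fin k → X → X) (ω : Fin 0 → Fin k) :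
    wordComp f ω = id := by
  simp [wordComp]

lemma sim_word {X : Type*} [MetricSpace X] (f : Fin k → X → X) (c : Fin k → ℝ)
    (hf : ∀ i, IsSimilarity (f i) (c i)) {n : ℕ} (ω : Fin n → Fin k) :
    IsSimilarity (wordComp f ω) (∏ i, c (ω i)) := by
  induction n with
  | zero => intro x y; simp [wordComp_zero]
  | succ n ih =>
    rw [wordComp_succ, Fin.prod_univ_succ]
    exact sim_comp (hf _) (ih _)

lemma sim_diam {X : Type*} [MetricSpace X] {g : X → X} {a : ℝ} (hg : IsSimilarity g a)
    (ha : 0 < a) (K : Set X) (hK : Bornology.IsBounded K) : diam (g '' K) = a * diam K := by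
  apply le_antisymm
  · exact (sim_lip hg ha).diam_image_le K hK
  · rw [← le_div_iff₀' ha]
    refine diam_le_of_forall_dist_le (by positivity) fun x hx y hy => ?_
    rw [le_div_iff₀' ha, ← hg x y]
    exact dist_le_diam_of_mem ((sim_lip hg ha).isBounded_image hK) (mem_image_of_mem _ hx)
      (mem_image_of_mem _ hy)

lemma word_cover {X : Type*} (f : Fin k → X → X) (K : Set X) (hK : K = ⋃ i, f i '' K) (n : ℕ) :
    K ⊆ ⋃ ω : Fin n → Fin k, wordComp f ω '' K := by
  induction n with
  | zero =>
    intro x hx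
    exact mem_iUnion.2 ⟨Fin.elim0, by simpa [wordComp_zero] using hx⟩
  | succ n ih =>
    intro x hx
    rw [hK] at hx
    obtain ⟨i, y, hy, rfl⟩ := mem_iUnion.1 hx
    obtain ⟨ω, z, hz, rfl⟩ := mem_iUnion.1 (ih hy)
    refine mem_iUnion.2 ⟨Fin.cons i ω, z, hz, ?_⟩
    rw [wordComp_succ]
    simp

lemma level_sum {X : Type*} [MetricSpace X] (f : Fin k → X → X) (c : Fin k → ℝ)
    (hc : ∀ i, 0 < c i) (hf : ∀ i, IsSimilarity (f i) (c i)) (K : Set X)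
    (hK : Bornology.IsBounded K) (hD : 0 < diam K) (t : ℝ) (ht : 0 ≤ t) (n : ℕ) :
    ∑ ω : Fin n → Fin k, ENNReal.ofReal (Metric.diam (wordComp f ω '' K)) ^ t =
      ENNReal.ofReal (diam K ^ t * (∑ i, c i ^ t) ^ n) := by
  have hp : ∀ ω : Fin n → Fin k, 0 < ∏ i, c (ω i) := fun ω => Finset.prod_pos fun i _ => hc _
  rw [Fintype.sum_pow, Finset.mul_sum, ENNReal.ofReal_sum_of_nonneg]
  · refine Finset.sum_congr rfl fun ω _ => ?_
    rw [sim_diam (sim_word f c hf ω) (hp ω) K hK, ENNReal.ofReal_rpow_of_nonneg _ ht,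
      Real.mul_rpow (hp ω).le hD.le, Real.finsetProd_rpow _ _ (fun i _ => (hc _).le), mul_comm]
    exact mul_nonneg (hp ω).le hD.le
  · intro ω _
    exact mul_nonneg (by positivity) (Finset.prod_nonneg fun i _ => Real.rpow_nonneg (hc _).le _)

lemma H3_zero_iff {X : Type*} [MetricSpace X] (f : Fin k → X → X) (c : Fin k → ℝ)
    (hc : ∀ i, c i ∈ Set.Ioo (0 : ℝ) 1) (hf : ∀ i, IsSimilarity (f i) (c i)) (K : Set X)
    (hK : Bornology.IsBounded K) (hD : 0 < diam K) (s : ℝ) (hsum : ∑ i, c i ^ s = 1)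
    (t : ℝ) (ht : 0 ≤ t) : H3 f K t = 0 ↔ s < t := by
  have hc0 : ∀ i, 0 < c i := fun i => (hc i).1
  constructor
  · intro h
    by_contra hst
    push Not at hst
    have h1 : 1 ≤ ∑ i, c i ^ t := by
      rw [← hsum]
      exact Finset.sum_le_sum fun i _ =>
        Real.rpow_le_rpow_of_exponent_ge (hc0 i) (hc i).2.le hst
    have h2 : ENNReal.ofReal (diam K ^ t) ≤ H3pre f K t 0 := by
      refine le_iInf fun m => ?_
      rw [level_sum f c hc0 hf K hK hD t ht]
      refine ENNReal.ofReal_le_ofReal ?_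
      exact le_mul_of_one_le_right (by positivity) (one_le_pow₀ h1)
    have h3 : H3pre f K t 0 ≤ H3 f K t := le_iSup (fun n => H3pre f K t n) 0
    have h4 : 0 < ENNReal.ofReal (diam K ^ t) := ENNReal.ofReal_pos.2 (by positivity)
    rw [h] at h3
    exact absurd (h4.trans_le (h2.trans h3)) (lt_irrefl _)
  · intro hst
    obtain ⟨a, b, -, -, -, -, -, -⟩ := exists_bounds c hc s hsum
    have hk : (Finset.univ : Finset (Fin k)).Nonempty := by
      by_contra h
      rw [Finset.not_nonempty_iff_eq_empty] at h
      rw [h] at hsum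
      simp at hsum
    have h1 : ∑ i, c i ^ t < 1 := by
      rw [← hsum]
      exact Finset.sum_lt_sum_of_nonempty hk fun i _ =>
        Real.rpow_lt_rpow_of_exponent_gt (hc0 i) (hc i).2 hst
    have h0 : 0 ≤ ∑ i, c i ^ t := Finset.sum_nonneg fun i _ => Real.rpow_nonneg (hc0 i).le _
    have hlim : Tendsto (fun n : ℕ => ENNReal.ofReal (diam K ^ t * (∑ i, c i ^ t) ^ n)) atTop
        (𝓝 0) := by
      rw [← ENNReal.ofReal_zero]
      refine ENNReal.tendsto_ofReal ?_
      simpa using (tendsto_pow_atTop_nhds_zero_of_lt_one h0 h1).const_mul (diam K ^ t)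
    have : ∀ n, H3pre f K t n = 0 := by
      intro n
      refine le_antisymm (ge_of_tendsto hlim ?_) (zero_le)
      filter_upwards [eventually_ge_atTop n] with m hm
      rw [← level_sum f c hc0 hf K hK hD t ht]
      exact iInf_le (fun m : {m : ℕ // n ≤ m} => ∑ ω : Fin m.1 → Fin k,
        ENNReal.ofReal (Metric.diam (wordComp f ω '' K)) ^ t) ⟨m, hm⟩
    simp [H3, this]

lemma dimH_upper (f : Fin k → 𝔼 → 𝔼) (c : Fin k → ℝ) (hc : ∀ i, c i ∈ Set.Ioo (0 : ℝ) 1)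
    (hf : ∀ i, IsSimilarity (f i) (c i)) (K : Set 𝔼) (hKb : Bornology.IsBounded K)
    (hK : K = ⋃ i, f i '' K) (hD : 0 < diam K)
    (s : ℝ) (hs : 0 ≤ s) (hsum : ∑ i, c i ^ s = 1) : dimH K ≤ ENNReal.ofReal s := by
  have hc0 : ∀ i, 0 < c i := fun i => (hc i).1
  obtain ⟨a, b, -, -, hb0, hb1, -, hb⟩ := exists_bounds c hc s hsum
  have hed : ∀ n (ω : Fin n → Fin k), ediam (wordComp f ω '' K) =
      ENNReal.ofReal (diam (wordComp f ω '' K)) := by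
    intro n ω
    have hp : 0 < ∏ i, c (ω i) := Finset.prod_pos fun i _ => hc0 _
    rw [Metric.diam, ENNReal.ofReal_toReal]
    exact ((sim_lip (sim_word f c hf ω) hp).isBounded_image hKb).ediam_ne_top
  have h := Measure.hausdorffMeasure_le_liminf_sum (ι := fun n => (Fin n → Fin k)) s K (l := atTop)
    (fun n : ℕ => ENNReal.ofReal (b ^ n * diam K)) (by
      rw [← ENNReal.ofReal_zero]
      refine ENNReal.tendsto_ofReal ?_
      simpa using (tendsto_pow_atTop_nhds_zero_of_lt_one hb0.le hb1).mul_const (diam K))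
    (fun n ω => wordComp f ω '' K)
    (Eventually.of_forall fun n ω => by
      have hp : 0 < ∏ i, c (ω i) := Finset.prod_pos fun i _ => hc0 _
      rw [hed, sim_diam (sim_word f c hf ω) hp K hKb]
      refine ENNReal.ofReal_le_ofReal (mul_le_mul_of_nonneg_right ?_ hD.le)
      calc ∏ i, c (ω i) ≤ ∏ _i : Fin n, b :=
            Finset.prod_le_prod (fun i _ => (hc0 _).le) (fun i _ => hb _)
        _ = b ^ n := by simp)
    (Eventually.of_forall fun n => word_cover f K hK n)
  simp_rw [hed, level_sum f c hc0 hf K hKb hD s hs, hsum, one_pow, mul_one] at h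
  rw [liminf_const] at h
  have h2 : μH[((s.toNNReal : ℝ≥0) : ℝ)] K ≠ ∞ := by
    rw [Real.coe_toNNReal s hs]
    exact (h.trans_lt ENNReal.ofReal_lt_top).ne
  exact dimH_le_of_hausdorffMeasure_ne_top h2

lemma dimH_lower (K : Set 𝔼) (hcpt : IsCompact K) (s : ℝ) (hs : 0 ≤ s) (q : ℝ) (hq : 0 < q)
    (hcov : ∀ (J : Finset ℕ) (x : ℕ → 𝔼) (ρ : ℕ → ℝ), (∀ j ∈ J, 0 < ρ j) →
      K ⊆ ⋃ j ∈ J, ball (x j) (ρ j) → 1 ≤ q * ∑ j ∈ J, ρ j ^ s) :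
    ENNReal.ofReal s ≤ dimH K := by
  rcases hs.eq_or_lt with rfl | hs0
  · simp
  refine le_dimH_of_hausdorffMeasure_ne_zero (d := s.toNNReal) ?_
  rw [Real.coe_toNNReal s hs]
  intro h0
  have hη : 0 < ENNReal.ofReal (1 / (4 * q)) := ENNReal.ofReal_pos.2 (by positivity)
  rw [Measure.hausdorffMeasure_apply] at h0
  have h1 := (le_iSup₂ (f := fun (r : ℝ≥0∞) (_ : 0 < r) =>
    ⨅ (t : ℕ → Set 𝔼) (_ : K ⊆ ⋃ n, t n) (_ : ∀ n, ediam (t n) ≤ r),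
          ∑' n, ⨆ _ : (t n).Nonempty, ediam (t n) ^ s) 1 one_pos).trans h0.le
  have h2 := h1.trans_lt hη
  simp only [iInf_lt_iff] at h2
  obtain ⟨t, htK, ht1, hts⟩ := h2
  have hsup : ∀ n, (⨆ _ : (t n).Nonempty, ediam (t n) ^ s) = ediam (t n) ^ s := by
    intro n
    rcases (t n).eq_empty_or_nonempty with he | he
    · simp [he, hs0]
    · simp [he]
  simp_rw [hsup] at hts
  obtain ⟨ε, hε0, hεs⟩ := ENNReal.exists_pos_sum_of_countable hη.ne' ℕ
  have hfin : ∀ n, ediam (t n) ≠ ∞ := fun n => ((ht1 n).trans_lt ENNReal.one_lt_top).ne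
  set ρ : ℕ → ℝ := fun n => (diam (t n) ^ s + ε n) ^ (1 / s) with hρ
  have hpos : ∀ n, 0 < diam (t n) ^ s + ε n := fun n =>
    add_pos_of_nonneg_of_pos (Real.rpow_nonneg diam_nonneg _) (hε0 n)
  have hρs : ∀ n, ρ n ^ s = diam (t n) ^ s + ε n := fun n => by
    rw [hρ, ← Real.rpow_mul (hpos n).le, one_div_mul_cancel hs0.ne', Real.rpow_one]
  have hρ0 : ∀ n, 0 < ρ n := fun n => Real.rpow_pos_of_pos (hpos n) _
  have hx : ∀ n, ∃ x : 𝔼, t n ⊆ ball x (ρ n) := by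
    intro n
    rcases (t n).eq_empty_or_nonempty with he | ⟨x, hx⟩
    · exact ⟨0, by simp [he]⟩
    · refine ⟨x, fun y hy => ?_⟩
      have e1 : dist y x ≤ diam (t n) := by
        rw [Metric.diam, dist_edist]
        exact ENNReal.toReal_mono (hfin n) (edist_le_ediam_of_mem hy hx)
      have e2 : diam (t n) < ρ n := by
        rw [← Real.rpow_lt_rpow_iff diam_nonneg (hρ0 n).le hs0, hρs]
        have : (0 : ℝ) < ε n := hε0 n
        linarith
      exact e1.trans_lt e2
  choose x hx using hx
  obtain ⟨J, hJ⟩ := hcpt.elim_finite_subcover (fun n => ball (x n) (ρ n))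
    (fun n => isOpen_ball) (htK.trans (iUnion_mono hx))
  have h3 := hcov J x ρ (fun j _ => hρ0 j) hJ
  have h4 : ENNReal.ofReal (∑ j ∈ J, ρ j ^ s) ≤
      ENNReal.ofReal (1 / (4 * q)) + ENNReal.ofReal (1 / (4 * q)) := by
    rw [ENNReal.ofReal_sum_of_nonneg (fun j _ => Real.rpow_nonneg (hρ0 j).le _)]
    calc _ = ∑ j ∈ J, (ediam (t j) ^ s + ε j) := by
          refine Finset.sum_congr rfl fun j _ => ?_
          rw [hρs, ENNReal.ofReal_add (Real.rpow_nonneg diam_nonneg _) (NNReal.coe_nonneg (ε j)),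
            ← ENNReal.ofReal_rpow_of_nonneg diam_nonneg hs, Metric.diam,
            ENNReal.ofReal_toReal (hfin j), ENNReal.ofReal_coe_nnreal]
      _ = ∑ j ∈ J, ediam (t j) ^ s + ∑ j ∈ J, (ε j : ℝ≥0∞) := Finset.sum_add_distrib
      _ ≤ _ := add_le_add ((ENNReal.sum_le_tsum J).trans hts.le)
          ((ENNReal.sum_le_tsum J).trans hεs.le)
  rw [← ENNReal.ofReal_add (by positivity) (by positivity),
    ENNReal.ofReal_le_ofReal_iff (by positivity)] at h4
  have h5 : q * ∑ j ∈ J, ρ j ^ s ≤ q * (1 / (4 * q) + 1 / (4 * q)) :=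
    mul_le_mul_of_nonneg_left h4 hq.le
  have h6 : q * (1 / (4 * q) + 1 / (4 * q)) = 1 / 2 := by field_simp; norm_num
  linarith

lemma sep_card {X : Type*} [MetricSpace X] (f : Fin k → X → X) (c : Fin k → ℝ)
    (hc : ∀ i, 0 < c i) (hf : ∀ i, IsSimilarity (f i) (c i)) (K : Set X)
    (hKb : Bornology.IsBounded K) (hK : K = ⋃ i, f i '' K) (hD : 0 < diam K)
    (s : ℝ) (hs : 0 ≤ s) (hsum : ∑ i, c i ^ s = 1)
    (a b : ℝ) (ha : 0 < a) (hab : ∀ i, a ≤ c i) (hb : ∀ i, c i ≤ b) (hb0 : 0 < b)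
    (n : ℕ) (δ : ℝ) (hδ : 0 < δ) (h1 : diam K * b ^ n ≤ δ) (h2 : δ ≤ diam K / a)
    (t : Finset X) (ht : ↑t ⊆ K) (hsep : (t : Set X).Pairwise fun x y => δ < dist x y) :
    (t.card : ℝ) ≤ (diam K / a) ^ s * δ ^ (-s) := by
  classical
  have big : ∀ δ : ℝ, 0 < δ → diam K ≤ δ → δ ≤ diam K / a → ∀ t : Finset X, ↑t ⊆ K →
      ((t : Set X).Pairwise fun x y => δ < dist x y) →
      (t.card : ℝ) ≤ (diam K / a) ^ s * δ ^ (-s) := by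
    intro δ hδ h1 h2 t ht hsep
    have : t.card ≤ 1 := by
      rw [Finset.card_le_one]
      intro x hx y hy
      by_contra hxy
      have e1 := hsep hx hy hxy
      have e2 := dist_le_diam_of_mem hKb (ht hx) (ht hy)
      linarith
    have e3 : (1 : ℝ) ≤ (diam K / a) ^ s * δ ^ (-s) := by
      rw [Real.rpow_neg hδ.le, ← div_eq_mul_inv, one_le_div (by positivity)]
      exact Real.rpow_le_rpow hδ.le h2 hs
    have e4 : (t.card : ℝ) ≤ 1 := by exact_mod_cast this
    linarith
  induction n generalizing δ t with
  | zero => exact big δ hδ (by simpa using h1) h2 t ht hsep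
  | succ n ih =>
    by_cases hle : diam K ≤ δ
    · exact big δ hδ hle h2 t ht hsep
    push Not at hle
    set T : Fin k → Finset X := fun i => t.filter (fun x => x ∈ f i '' K) with hT
    have hcard : t.card ≤ ∑ i, (T i).card := by
      refine le_trans (Finset.card_le_card ?_) Finset.card_biUnion_le
      intro x hx
      have : x ∈ ⋃ i, f i '' K := hK ▸ ht hx
      obtain ⟨i, hi⟩ := mem_iUnion.1 this
      exact Finset.mem_biUnion.2 ⟨i, Finset.mem_univ _, Finset.mem_filter.2 ⟨hx, hi⟩⟩
    have hi : ∀ i, ((T i).card : ℝ) ≤ (diam K / a) ^ s * (δ / c i) ^ (-s) := by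
      intro i
      have hci := hc i
      have hsub : (T i : Set X) ⊆ f i '' K := fun x hx => (Finset.mem_filter.1 hx).2
      obtain ⟨u, huK, hu⟩ := Finset.subset_set_image_iff.1 hsub
      rw [← hu, Finset.card_image_of_injective _ (sim_inj (hf i) hci)]
      refine ih (δ / c i) (by positivity) ?_ ?_ u huK ?_
      · rw [le_div_iff₀ hci]
        refine le_trans ?_ h1
        rw [pow_succ, mul_assoc]
        have := hb i
        gcongr
      · have := hab i
        gcongr
      · intro x hx y hy hxy
        have e1 : ∀ z ∈ u, f i z ∈ t := fun z hz => by
          have : f i z ∈ T i := hu ▸ Finset.mem_image_of_mem _ hz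
          exact (Finset.mem_filter.1 this).1
        have e2 := hsep (e1 x hx) (e1 y hy) ((sim_inj (hf i) hci).ne hxy)
        simp only [hf i x y] at e2
        rwa [div_lt_iff₀' hci]
    calc (t.card : ℝ) ≤ ∑ i, ((T i).card : ℝ) := by exact_mod_cast hcard
      _ ≤ ∑ i, (diam K / a) ^ s * (δ / c i) ^ (-s) := Finset.sum_le_sum fun i _ => hi i
      _ = ∑ i, ((diam K / a) ^ s * δ ^ (-s)) * c i ^ s := by
          refine Finset.sum_congr rfl fun i _ => ?_
          have hci := hc i
          rw [Real.div_rpow hδ.le hci.le, Real.rpow_neg hci.le, div_inv_eq_mul, mul_assoc]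
      _ = _ := by rw [← Finset.mul_sum, hsum, mul_one]

lemma packing_bounds (K : Set 𝔼) (s δ C q : ℝ) (hδ : 0 < δ) (hq : 0 < q)
    (hcard : ∀ t : Finset 𝔼, ↑t ⊆ K → ((t : Set 𝔼).Pairwise fun x y => δ < dist x y) →
      (t.card : ℝ) ≤ C)
    (hcov : ∀ (J : Finset 𝔼) (x : 𝔼 → 𝔼) (ρ : 𝔼 → ℝ), (∀ j ∈ J, 0 < ρ j) →
      K ⊆ ⋃ j ∈ J, ball (x j) (ρ j) → 1 ≤ q * ∑ j ∈ J, ρ j ^ s) :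
    (packingNum K δ : ℝ) ≤ C ∧ 1 ≤ q * (packingNum K δ * (3 * δ) ^ s) := by
  classical
  set S : Set ℕ := {m : ℕ | ∃ t : Finset 𝔼, t.card = m ∧ ↑t ⊆ K ∧
    (t : Set 𝔼).Pairwise fun x y => Disjoint (Metric.closedBall x δ) (Metric.closedBall y δ)}
    with hS
  have hN : packingNum K δ = sSup S := rfl
  have hSC : ∀ m ∈ S, (m : ℝ) ≤ C := by
    rintro m ⟨t, rfl, htK, hd⟩
    refine hcard t htK fun x hx y hy hxy => ?_
    by_contra hle
    push Not at hle
    exact (Set.disjoint_left.1 (hd hx hy hxy)) (a := x) (mem_closedBall_self hδ.le)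
      (mem_closedBall.2 hle)
  have hbdd : BddAbove S := ⟨⌊C⌋₊, fun m hm => Nat.le_floor (hSC m hm)⟩
  have hnon : S.Nonempty := ⟨0, ∅, by simp⟩
  have hmem : sSup S ∈ S := Nat.sSup_mem hnon hbdd
  rw [hN]
  refine ⟨hSC _ hmem, ?_⟩
  obtain ⟨t, htc, htK, hd⟩ := hmem
  have := hcov t id (fun _ => 3 * δ) (fun _ _ => by positivity) ?_
  · rwa [Finset.sum_const, nsmul_eq_mul, htc] at this
  intro x hx
  by_contra hnot
  simp only [id, mem_iUnion, mem_ball, not_exists, not_lt] at hnot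
  have hxt : x ∉ t := fun h => by
    have := hnot x h
    rw [dist_self] at this
    linarith
  have hin : t.card + 1 ∈ S := by
    refine ⟨insert x t, Finset.card_insert_of_notMem hxt, ?_, ?_⟩
    · rw [Finset.coe_insert]
      exact insert_subset hx htK
    · rw [Finset.coe_insert]
      refine hd.insert fun y hy _ => ?_
      have hxy : Disjoint (closedBall x δ) (closedBall y δ) :=
        closedBall_disjoint_closedBall (by linarith [hnot y hy])
      exact ⟨hxy, hxy.symm⟩
  have := le_csSup hbdd hin
  omega

lemma box_limit (N : ℝ → ℕ) (s C q D : ℝ) (hD : 0 < D) (hC : 0 < C) (hq : 0 < q)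
    (h : ∀ δ, 0 < δ → δ ≤ D → (N δ : ℝ) ≤ C * δ ^ (-s) ∧ 1 ≤ q * (N δ * (3 * δ) ^ s)) :
    Tendsto (fun δ : ℝ => Real.log (N δ) / (-Real.log δ)) (𝓝[>] (0 : ℝ)) (𝓝 s) := by
  have hL : Tendsto (fun δ : ℝ => -Real.log δ) (𝓝[>] (0 : ℝ)) atTop :=
    tendsto_neg_atBot_atTop.comp Real.tendsto_log_nhdsGT_zero
  have key : ∀ A : ℝ, Tendsto (fun δ : ℝ => A / (-Real.log δ) + s) (𝓝[>] (0 : ℝ)) (𝓝 s) := by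
    intro A
    simpa using (hL.const_div_atTop A).add_const s
  refine tendsto_of_tendsto_of_tendsto_of_le_of_le' (key (-Real.log (q * 3 ^ s)))
    (key (Real.log C)) ?_ ?_
  all_goals
    filter_upwards [self_mem_nhdsWithin, hL.eventually_gt_atTop 0,
      nhdsWithin_le_nhds (Iic_mem_nhds hD)] with δ hδ hlog hδD
    replace hδ : 0 < δ := hδ
    obtain ⟨h1, h2⟩ := h δ hδ hδD
    have hN : (0 : ℝ) < N δ := by
      rcases Nat.eq_zero_or_pos (N δ) with h0 | h0
      · rw [h0] at h2; norm_num at h2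
      · exact_mod_cast h0
  · rw [← sub_nonneg]
    have e : (1 : ℝ) ≤ (q * 3 ^ s) * (N δ * δ ^ s) := by
      rw [Real.mul_rpow (by norm_num) hδ.le] at h2
      linarith
    have e2 := Real.log_nonneg e
    rw [Real.log_mul (by positivity) (by positivity),
      Real.log_mul (x := (N δ : ℝ)) (by positivity) (by positivity), Real.log_rpow hδ] at e2
    have e3 : Real.log (N δ) / -Real.log δ - (-Real.log (q * 3 ^ s) / -Real.log δ + s) =
        (Real.log (q * 3 ^ s) + (Real.log (N δ) + s * Real.log δ)) / (-Real.log δ) := by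
      have : Real.log δ ≠ 0 := by linarith
      field_simp
      ring
    rw [e3]
    positivity
  · have e2 := Real.log_le_log hN h1
    rw [Real.log_mul (by positivity) (by positivity), Real.log_rpow hδ] at e2
    rw [div_le_iff₀ hlog, add_mul, div_mul_cancel₀ _ hlog.ne']
    linarith

end Aux

/-- under the OSC, the fractal dimension III, the box dimension and the
Hausdorff dimension of the attractor all equal the unique `s` with `∑ cᵢ^s = 1`. -/
theorem dim3_eq_box_eq_hausdorff {d k : ℕ}
    (f : Fin k → EuclideanSpace ℝ (Fin d) → EuclideanSpace ℝ (Fin d))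
    (c : Fin k → ℝ) (hc : ∀ i, c i ∈ Set.Ioo (0 : ℝ) 1)
    (hf : ∀ i, IsSimilarity (f i) (c i)) (hosc : OSC f)
    (K : Set (EuclideanSpace ℝ (Fin d))) (hne : K.Nonempty) (hcpt : IsCompact K)
    (hK : K = ⋃ i, f i '' K) (hdiam : 0 < Metric.diam K)
    (s : ℝ) (hs : 0 ≤ s) (hsum : ∑ i, c i ^ s = 1) :
    sInf {t : ℝ | 0 ≤ t ∧ H3 f K t = 0} = s ∧
      Filter.Tendsto (fun δ : ℝ => Real.log (packingNum K δ) / (-Real.log δ))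
        (𝓝[>] (0 : ℝ)) (𝓝 s) ∧
      dimH K = ENNReal.ofReal s := by
  have hc0 : ∀ i, 0 < c i := fun i => (hc i).1
  have hKs : ∀ i, f i '' K ⊆ K := fun i => by
    conv_rhs => rw [hK]
    exact subset_iUnion (fun i => f i '' K) i
  have hKb := hcpt.isBounded
  obtain ⟨q, hq, hcov⟩ := mass_cover f c hc hf hosc K hne hcpt hKs s hs hsum
  refine ⟨?_, ?_, ?_⟩
  · have : {t : ℝ | 0 ≤ t ∧ H3 f K t = 0} = Ioi s := by
      ext t
      constructor
      · rintro ⟨h0, h⟩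
        exact (H3_zero_iff f c hc hf K hKb hdiam s hsum t h0).1 h
      · intro h
        have h0 : 0 ≤ t := hs.trans (le_of_lt h)
        exact ⟨h0, (H3_zero_iff f c hc hf K hKb hdiam s hsum t h0).2 h⟩
    rw [this, csInf_Ioi]
  · obtain ⟨a, b, ha, ha1, hb0, hb1, hab, hb⟩ := exists_bounds c hc s hsum
    refine box_limit (packingNum K) s ((diam K / a) ^ s) q (diam K) hdiam (by positivity) hq ?_
    intro δ hδ hδD
    refine packing_bounds K s δ _ q hδ hq ?_ (fun J x ρ h1 h2 => hcov J x ρ h1 h2)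
    intro t ht hsep
    have hlim : Tendsto (fun n : ℕ => diam K * b ^ n) atTop (𝓝 0) := by
      simpa using (tendsto_pow_atTop_nhds_zero_of_lt_one hb0.le hb1).const_mul (diam K)
    obtain ⟨n, hn⟩ := (hlim.eventually (gt_mem_nhds hδ)).exists
    refine sep_card f c hc0 hf K hKb hK hdiam s hs hsum a b ha hab hb hb0 n δ hδ hn.le ?_ t ht hsep
    rw [le_div_iff₀ ha]
    nlinarith
  · exact le_antisymm (dimH_upper f c hc hf K hKb hK hdiam s hs hsum)
      (dimH_lower K hcpt s hs q hq (fun J x ρ h1 h2 => hcov J x ρ h1 h2))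
end
end
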